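/- Let f_1, f_2 : ℝ² → ℝ be given by f_1(r, s) = (r² + s²)/2 and f_2(r, s) = r. Then for every neighborhood V of the point (1, 0) in ℝ² and every η with 1/2 < η ≤ 1, the quantity sup { ‖Λf(y) − Λf(z)‖ / ‖y − z‖^η : y, z ∈ V, y ≠ z } is +∞; i.e., Λf is not Hölder continuous with any exponent η > 1/2 on any neighborhood of (1, 0). -/

import Mathlib

/-!
Since `∇f₁(r, s) = (r, s)` and `∇f₂ = (1, 0)`, the direction `Λ(x)` is minus the element of least
norm of the segment joining `x` to `(1, 0)`. For small `ε > 0` put `r = 1 - ε` and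
`s = √(ε (1 - ε))`, so that `r² + s² = r`: the point `y = (r, s)` lies on the circle with diameter
from `0` to `(1, 0)`, and there the element of least norm is the endpoint `y` itself
(`minimizer_on_circle`), so `Λ y = -y`. For `z = (1, s)` it is the other endpoint, so
`Λ z = (-1, 0)` (`minimizer_on_line`). Thus `‖y - z‖ = ε` while `‖Λ y - Λ z‖ ≥ s ≥ √ε / 2`, which
beats `C ε ^ η` as `ε → 0` because `η > 1/2`.
-/

open scoped RealInnerProductSpace

/-- The point `(a, b)` of `ℝ²` (with the Euclidean structure). -/
noncomputable def pt (a b : ℝ) : EuclideanSpace ℝ (Fin 2) :=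
  (WithLp.equiv 2 (Fin 2 → ℝ)).symm ![a, b]

/-- `f₁(r, s) = (r² + s²)/2`. -/
noncomputable def f₁ (p : EuclideanSpace ℝ (Fin 2)) : ℝ := (p 0 ^ 2 + p 1 ^ 2) / 2

/-- `f₂(r, s) = r`. -/
noncomputable def f₂ (p : EuclideanSpace ℝ (Fin 2)) : ℝ := p 0

/-- The objective `v ↦ max_{i=1,2} ⟪∇f_i(x), v⟫ + (1/2)‖v‖²` whose unique minimizer
is the multiobjective steepest descent direction `Λf(x)`. -/
noncomputable def Φ (x v : EuclideanSpace ℝ (Fin 2)) : ℝ :=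
  max ⟪gradient f₁ x, v⟫ ⟪gradient f₂ x, v⟫ + (1 / 2) * ‖v‖ ^ 2

open Filter Topology

@[simp] lemma pt_zero (a b : ℝ) : pt a b 0 = a := by simp [pt]

@[simp] lemma pt_one (a b : ℝ) : pt a b 1 = b := by simp [pt]

lemma inner_eq (x v : EuclideanSpace ℝ (Fin 2)) : ⟪x, v⟫ = x 0 * v 0 + x 1 * v 1 := by
  simp [PiLp.inner_apply, Fin.sum_univ_two, mul_comm]

lemma norm_sq_eq (v : EuclideanSpace ℝ (Fin 2)) : ‖v‖ ^ 2 = v 0 ^ 2 + v 1 ^ 2 := by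
  simp [EuclideanSpace.norm_sq_eq, Fin.sum_univ_two]

lemma gradient_f₁ (x : EuclideanSpace ℝ (Fin 2)) : gradient f₁ x = x := by
  have hf : f₁ = fun p => (1 / 2 : ℝ) * ‖p‖ ^ 2 := by
    funext p
    rw [norm_sq_eq, f₁]
    ring
  apply HasGradientAt.gradient
  rw [hf, hasGradientAt_iff_hasFDerivAt]
  refine (((hasStrictFDerivAt_norm_sq x).hasFDerivAt).const_mul (1 / 2 : ℝ)).congr_fderiv ?_
  ext v
  simp

lemma gradient_f₂ (x : EuclideanSpace ℝ (Fin 2)) : gradient f₂ x = pt 1 0 := by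
  have hf : f₂ = fun p => innerSL ℝ (pt 1 0) p := by
    funext p
    simp [f₂, inner_eq]
  apply HasGradientAt.gradient
  rw [hf, hasGradientAt_iff_hasFDerivAt]
  exact (innerSL ℝ (pt 1 0)).hasFDerivAt

lemma Φ_eq (x v : EuclideanSpace ℝ (Fin 2)) :
    Φ x v = max (x 0 * v 0 + x 1 * v 1) (v 0) + (1 / 2) * (v 0 ^ 2 + v 1 ^ 2) := by
  simp [Φ, gradient_f₁, gradient_f₂, inner_eq, EuclideanSpace.norm_sq_eq, Fin.sum_univ_two]

/-- On the line `r = 1` the second gradient `(1, 0)` has least norm in the segment joining the two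
gradients: completing the square in
`⟪∇f₂, v⟫ + ‖v‖² / 2 ≤ Φ (1, s) v` forces a minimizer to be `(-1, 0)`;
only its second coordinate is needed. -/
lemma minimizer_on_line {s : ℝ} {v : EuclideanSpace ℝ (Fin 2)}
    (hv : ∀ w, Φ (pt 1 s) v ≤ Φ (pt 1 s) w) : v 1 = 0 := by
  have h := hv (pt (-1) 0)
  simp only [Φ_eq, pt_zero, pt_one, mul_zero, add_zero, one_mul, max_self] at h
  have h2 := le_max_right (v 0 + s * v 1) (v 0)
  have : v 1 ^ 2 ≤ 0 := by nlinarith [sq_nonneg (v 0 + 1)]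
  exact pow_eq_zero_iff two_ne_zero |>.1 (le_antisymm this (sq_nonneg _))

/-- On the circle `r² + s² = r` the first gradient `(r, s)` has least norm in the segment joining
the two gradients: completing the square in
`⟪∇f₁, v⟫ + ‖v‖² / 2 ≤ Φ (r, s) v` forces a minimizer to be `(-r, -s)`;
only its second coordinate is needed. -/
lemma minimizer_on_circle {r s : ℝ} (hrs : r ^ 2 + s ^ 2 = r) {v : EuclideanSpace ℝ (Fin 2)}
    (hv : ∀ w, Φ (pt r s) v ≤ Φ (pt r s) w) : v 1 = -s := by
  have h := hv (pt (-r) (-s))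
  have h1 : r * -r + s * -s = -r := by linarith
  simp only [Φ_eq, pt_zero, pt_one, h1, max_self] at h
  have h2 := le_max_left (r * v 0 + s * v 1) (v 0)
  have : (v 1 + s) ^ 2 ≤ 0 := by nlinarith [sq_nonneg (v 0 + r)]
  have := pow_eq_zero_iff two_ne_zero |>.1 (le_antisymm this (sq_nonneg _))
  linarith

lemma continuous_pt {g h : ℝ → ℝ} (hg : Continuous g) (hh : Continuous h) :
    Continuous fun t => pt (g t) (h t) := by
  refine (PiLp.continuous_toLp 2 _).comp (continuous_pi fun i => ?_)
  fin_cases i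
  · exact hg
  · exact hh

/-- For every neighborhood `V` of `(1,0)` and every `η ∈ (1/2, 1]`,
`sup { ‖Λf(y) - Λf(z)‖ / ‖y - z‖^η : y, z ∈ V, y ≠ z } = +∞`; i.e., for every
constant `C` there are `y ≠ z` in `V` with `‖Λf(y) - Λf(z)‖ > C ‖y - z‖^η`. -/
theorem lambda_not_holder_above_half (Λ : EuclideanSpace ℝ (Fin 2) → EuclideanSpace ℝ (Fin 2))
    (hmin : ∀ x w, Φ x (Λ x) ≤ Φ x w) :
    ∀ V ∈ nhds (pt 1 0), ∀ η : ℝ, 1 / 2 < η → η ≤ 1 → ∀ C : ℝ,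
      ∃ y ∈ V, ∃ z ∈ V, y ≠ z ∧ C * ‖y - z‖ ^ η < ‖Λ y - Λ z‖ := by
  intro V hV η hη _ C
  have hy : ∀ᶠ ε in 𝓝[>] (0 : ℝ), pt (1 - ε) (√(ε * (1 - ε))) ∈ V := by
    have hc : Continuous fun ε : ℝ => pt (1 - ε) (√(ε * (1 - ε))) :=
      continuous_pt (by fun_prop) (by fun_prop)
    have ht := hc.tendsto 0
    simp only [sub_zero, mul_one, Real.sqrt_zero] at ht
    exact (ht.mono_left nhdsWithin_le_nhds) hV
  have hz : ∀ᶠ ε in 𝓝[>] (0 : ℝ), pt 1 (√(ε * (1 - ε))) ∈ V := by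
    have hc : Continuous fun ε : ℝ => pt 1 (√(ε * (1 - ε))) :=
      continuous_pt (by fun_prop) (by fun_prop)
    have ht := hc.tendsto 0
    simp only [sub_zero, mul_one, Real.sqrt_zero] at ht
    exact (ht.mono_left nhdsWithin_le_nhds) hV
  have hC : ∀ᶠ ε in 𝓝[>] (0 : ℝ), C * ε ^ (η - 1 / 2) < 1 / 2 := by
    have hpos : 0 < η - 1 / 2 := by linarith
    have ht : Tendsto (fun ε : ℝ => C * ε ^ (η - 1 / 2)) (𝓝 0) (𝓝 (C * 0 ^ (η - 1 / 2))) :=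
      ((Real.continuousAt_rpow_const 0 _ (Or.inr hpos.le)).tendsto).const_mul C
    rw [Real.zero_rpow hpos.ne', mul_zero] at ht
    exact (ht.mono_left nhdsWithin_le_nhds).eventually (gt_mem_nhds (by norm_num))
  have hsmall : ∀ᶠ ε in 𝓝[>] (0 : ℝ), ε ∈ Set.Ioo (0 : ℝ) (1 / 2) :=
    Ioo_mem_nhdsGT (by norm_num)
  obtain ⟨ε, hyV, hzV, hCε, hε0, hε⟩ := (hy.and (hz.and (hC.and hsmall))).exists
  set s := √(ε * (1 - ε)) with hs
  have hs2 : s ^ 2 = ε * (1 - ε) := Real.sq_sqrt (by nlinarith)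
  refine ⟨pt (1 - ε) s, hyV, pt 1 s, hzV, ?_, ?_⟩
  · intro h
    have := congrArg (fun p : EuclideanSpace ℝ (Fin 2) => p 0) h
    simp at this
    linarith
  have hdist : ‖pt (1 - ε) s - pt 1 s‖ = ε := by
    rw [← sq_eq_sq₀ (norm_nonneg _) hε0.le, norm_sq_eq]
    simp
  have hΛy := minimizer_on_circle (r := 1 - ε) (s := s) (by rw [hs2]; ring) (hmin _)
  have hΛz := minimizer_on_line (s := s) (hmin _)
  -- The second coordinates alone already differ by `s`.
  have hlow : s ≤ ‖Λ (pt (1 - ε) s) - Λ (pt 1 s)‖ := by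
    refine abs_le_of_sq_le_sq' ?_ (norm_nonneg _) |>.2
    rw [norm_sq_eq, PiLp.sub_apply, PiLp.sub_apply, hΛy, hΛz]
    nlinarith [sq_nonneg (Λ (pt (1 - ε) s) 0 - Λ (pt 1 s) 0)]
  have hsε : √ε * (1 / 2) ≤ s := by
    apply Real.le_sqrt_of_sq_le
    rw [mul_pow, Real.sq_sqrt hε0.le]
    nlinarith
  have hsplit : ε ^ η = √ε * ε ^ (η - 1 / 2) := by
    rw [Real.sqrt_eq_rpow, ← Real.rpow_add hε0]
    congr 1
    ring
  rw [hdist]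
  calc C * ε ^ η = √ε * (C * ε ^ (η - 1 / 2)) := by rw [hsplit]; ring
    _ < √ε * (1 / 2) := mul_lt_mul_of_pos_left hCε (Real.sqrt_pos.2 hε0)
    _ ≤ s := hsε
    _ ≤ _ := hlow
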